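/- If n or k is odd (with 0 ≤ k ≤ n, 0 ≤ r < n), then the number of k-element subsets of {1,…,n} whose elements sum to r mod n equals the number of binary necklaces of length n with k ones whose co-period divides r. -/

import Mathlib

open Finset

/-- Number of ones in a cyclic binary word of length `n`. -/
noncomputable def onesCount (n : ℕ) (w : ZMod n → Bool) : ℕ :=
  Nat.card {i : ZMod n // w i = true}

/-- The co-period of a cyclic binary word `w` of length `n`: the size of its
stabilizer under cyclic rotation (equivalently, the `j` such that `w = v^j`
with `v` primitive). -/
noncomputable def coPeriod (n : ℕ) (w : ZMod n → Bool) : ℕ :=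
  Nat.card {t : ZMod n // ∀ i, w (i + t) = w i}

/-- Two cyclic words are related iff they are cyclic rotations of each other. -/
def rotRel (n : ℕ) (u v : ZMod n → Bool) : Prop :=
  ∃ t : ZMod n, ∀ i, u i = v (i + t)

theorem rotRel_equivalence (n : ℕ) : Equivalence (rotRel n) := by
  constructor
  · exact fun u => ⟨0, fun i => by rw [add_zero]⟩
  · rintro u v ⟨t, h⟩
    exact ⟨-t, fun i => by rw [h, neg_add_cancel_right]⟩
  · rintro u v w ⟨t1, h1⟩ ⟨t2, h2⟩
    exact ⟨t1 + t2, fun i => by rw [h1, h2, ← add_assoc]⟩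

def rotSetoid (n : ℕ) : Setoid (ZMod n → Bool) := ⟨rotRel n, rotRel_equivalence n⟩

/-- The number of binary necklaces of length `n` with `k` ones. -/
noncomputable def NCard (n k : ℕ) : ℕ :=
  Nat.card (Quotient (Setoid.comap
    (Subtype.val : {w : ZMod n → Bool // onesCount n w = k} → _) (rotSetoid n)))

/-- The number of binary necklaces of length `n` with `k` ones whose co-period divides `r`. -/
noncomputable def NrCard (n k r : ℕ) : ℕ :=
  Nat.card (Quotient (Setoid.comap
    (Subtype.val : {w : ZMod n → Bool // onesCount n w = k ∧ coPeriod n w ∣ r} → _)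
    (rotSetoid n)))

/-- The number of `k`-element subsets of `{1,…,n}` whose elements sum to `r` mod `n`. -/
def SbarCard (n k r : ℕ) : ℕ :=
  ((Finset.Icc 1 n).powerset.filter
    (fun A => A.card = k ∧ (∑ a ∈ A, a) % n = r)).card

/-- The number of `k`-element subsets of `{1,…,n-1}` whose elements sum to `r` mod `n`. -/
def SCard (n k r : ℕ) : ℕ :=
  ((Finset.Icc 1 (n - 1)).powerset.filter
    (fun A => A.card = k ∧ (∑ a ∈ A, a) % n = r)).card

/-- The Ramanujan sum `c_d(r) = ∑_{j ∣ gcd(r,d)} j · μ(d/j)`. -/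
def ramanujanSum (d : ℕ) (r : ℤ) : ℤ :=
  ∑ j ∈ (Int.gcd r d).divisors, (j : ℤ) * ArithmeticFunction.moebius (d / j)


/-!
Write `e` for the standard additive character of `ℤ/n`. Fourier inversion expresses `n` times the
number of `k`-subsets of `ℤ/n` with sum `r` as `∑ₜ e(-rt) ∑_A e(t ∑ A)`. If `t` has order `d`, the
inner sum is the coefficient of `X ^ k` in `∏ₐ (1 + e(ta) X) = (1 - (-X) ^ d) ^ (n / d)`. When `n`
or `k` is odd this is `(n / d).choose (k / d)` if `d ∣ k` and `0` otherwise, which is the number of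
`k`-subsets fixed by translation by `t`. Hence the double sum is a Burnside sum twisted by the
character `t ↦ e(-rt)`, and it counts `n` times the orbits of `k`-subsets on whose stabilizers this
character is trivial. The stabilizer is a subgroup of a cyclic group, so that happens exactly when
its order, the co-period, divides `r`.
-/

open scoped Pointwise
open AddAction Polynomial

section TwistedBurnside

variable {G X R : Type*} [AddGroup G] [AddAction G X]

variable (X) in
/-- The points of `X` on whose stabilizer the additive character `ψ` is trivial. They form a union
of orbits. -/
def trivialOnStabilizer [CommMonoid R] (ψ : AddChar G R) : SubAddAction G X where
  carrier := {x | ∀ g ∈ stabilizer G x, ψ g = 1}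
  vadd_mem' h x hx g hg := by
    have hconj : -h + g + h ∈ stabilizer G x := by
      rw [mem_stabilizer_iff] at hg ⊢
      rw [add_vadd, add_vadd, hg, neg_vadd_vadd]
    have hψ := hx _ hconj
    rwa [AddChar.map_add_eq_mul, AddChar.map_add_eq_mul, mul_right_comm,
      ← AddChar.map_add_eq_mul, neg_add_cancel, AddChar.map_zero_eq_one, one_mul] at hψ

theorem mem_trivialOnStabilizer [CommMonoid R] {ψ : AddChar G R} {x : X} :
    x ∈ trivialOnStabilizer X ψ ↔ ∀ g ∈ stabilizer G x, ψ g = 1 :=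
  Iff.rfl

variable (G X) in
theorem sum_card_stabilizer [Finite G] [Fintype X] :
    ∑ x : X, Nat.card (stabilizer G x) = Nat.card G * Nat.card (orbitRel.Quotient G X) := by
  classical
  rw [← Nat.card_sigma, mul_comm, ← Nat.card_prod]
  refine Nat.card_congr (Equiv.trans ?_ (sigmaFixedByEquivOrbitsProdAddGroup G X))
  exact (Equiv.subtypeProdEquivSigmaSubtype fun (x : X) (g : G) => g +ᵥ x = x).symm.trans
    (((Equiv.prodComm X G).subtypeEquiv fun _ => Iff.rfl).trans
      (Equiv.subtypeProdEquivSigmaSubtype fun (g : G) (x : X) => g +ᵥ x = x))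

theorem sum_stabilizer_addChar [Fintype G] [CommSemiring R] [IsDomain R] (ψ : AddChar G R) (x : X)
    [DecidablePred fun g : G => g +ᵥ x = x] [Decidable (x ∈ trivialOnStabilizer X ψ)] :
    ∑ g : G with g +ᵥ x = x, ψ g
      = if x ∈ trivialOnStabilizer X ψ then (Nat.card (stabilizer G x) : R) else 0 := by
  classical
  let φ : AddChar (stabilizer G x) R := ψ.compAddMonoidHom (stabilizer G x).subtype
  have htrivial : φ = 0 ↔ x ∈ trivialOnStabilizer X ψ := by
    simp [φ, AddChar.eq_zero_iff, mem_trivialOnStabilizer]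
  calc ∑ g : G with g +ᵥ x = x, ψ g = ∑ g, φ g := sum_subtype _ (by simp) _
    _ = _ := by simp only [AddChar.sum_eq_ite, htrivial, Nat.card_eq_fintype_card]

/-- Burnside's lemma twisted by a character. -/
theorem sum_addChar_mul_card_fixedBy [Fintype G] [Finite X] [CommSemiring R] [IsDomain R]
    (ψ : AddChar G R) :
    ∑ g, ψ g * Nat.card (fixedBy X g) =
      Nat.card G * Nat.card (orbitRel.Quotient G (trivialOnStabilizer X ψ)) := by
  classical
  have := Fintype.ofFinite X
  calc ∑ g, ψ g * (Nat.card (fixedBy X g) : R)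
      = ∑ g, ∑ x : X with g +ᵥ x = x, ψ g := by
        refine sum_congr rfl fun g _ => ?_
        rw [sum_const, nsmul_eq_mul, mul_comm, ← Fintype.card_subtype, ← Nat.card_eq_fintype_card]
        rfl
    _ = ∑ x : X, ∑ g : G with g +ᵥ x = x, ψ g := by
        simp only [sum_filter]
        exact sum_comm
    _ = ∑ x : trivialOnStabilizer X ψ, (Nat.card (stabilizer G x) : R) := by
        simp only [sum_stabilizer_addChar, ← sum_filter]
        rw [sum_subtype _ fun x => mem_filter_univ x]
        exact sum_congr rfl fun x _ => by rw [SubAddAction.stabilizer_of_subAdd]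
    _ = _ := by exact_mod_cast congrArg (Nat.cast (R := R)) (sum_card_stabilizer G _)

end TwistedBurnside

section CosetUnion

variable {G : Type*} [AddGroup G] [Fintype G] {H : AddSubgroup G} [DecidableEq (G ⧸ H)]

/-- The union of the cosets of `H` that belong to `B`. -/
def cosetUnion (B : Finset (G ⧸ H)) : Finset G :=
  {a | (a : G ⧸ H) ∈ B}

theorem mem_cosetUnion {B : Finset (G ⧸ H)} {a : G} : a ∈ cosetUnion B ↔ (a : G ⧸ H) ∈ B := by
  rw [cosetUnion, mem_filter_univ]

theorem cosetUnion_injective : Function.Injective (cosetUnion (H := H)) := fun B B' h => by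
  ext q
  obtain ⟨a, rfl⟩ := QuotientAddGroup.mk_surjective q
  rw [← mem_cosetUnion, h, mem_cosetUnion]

theorem card_cosetUnion (B : Finset (G ⧸ H)) : #(cosetUnion B) = Nat.card H * #B := by
  have hpreimage : (cosetUnion B : Set G) = QuotientAddGroup.mk ⁻¹' (B : Set (G ⧸ H)) :=
    Set.ext fun _ => mem_cosetUnion
  rw [← Set.ncard_coe_finset, hpreimage, ← Nat.card_coe_set_eq,
    Nat.card_congr (QuotientAddGroup.preimageMkEquivAddSubgroupProdSet _ _), Nat.card_prod,
    Nat.card_coe_set_eq, Set.ncard_coe_finset]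

end CosetUnion

section FixedSubsets

variable {G : Type*} [AddCommGroup G] [DecidableEq G]

theorem vadd_eq_self_iff_exists_cosetUnion [Fintype G] {t : G} {A : Finset G}
    [DecidableEq (G ⧸ AddSubgroup.zmultiples t)] :
    t +ᵥ A = A ↔ ∃ B : Finset (G ⧸ AddSubgroup.zmultiples t), cosetUnion B = A := by
  constructor
  · intro ht
    have hstab : AddSubgroup.zmultiples t ≤ stabilizer G A := AddSubgroup.zmultiples_le_of_mem ht
    refine ⟨A.image (↑), ext fun a => ?_⟩
    rw [mem_cosetUnion, mem_image]
    refine ⟨?_, fun ha => ⟨a, ha, rfl⟩⟩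
    rintro ⟨b, hb, hba⟩
    have hfix : (-b + a) +ᵥ A = A := hstab (QuotientAddGroup.eq.1 hba)
    rw [← hfix, ← neg_vadd_mem_iff, vadd_eq_add]
    simpa using hb
  · rintro ⟨B, rfl⟩
    ext a
    rw [← neg_vadd_mem_iff, mem_cosetUnion, mem_cosetUnion, vadd_eq_add]
    congr! 1
    rw [QuotientAddGroup.eq]
    simp

theorem card_fixedBy_powersetCard_eq_card_subtype [Finite G] (t : G) (k : ℕ) :
    Nat.card (fixedBy (Set.powersetCard G k) t) =
      Nat.card {B : Finset (G ⧸ AddSubgroup.zmultiples t) // addOrderOf t * #B = k} := by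
  classical
  have := Fintype.ofFinite G
  let H := AddSubgroup.zmultiples t
  have hcard (B : Finset (G ⧸ H)) : #(cosetUnion B) = addOrderOf t * #B := by
    rw [card_cosetUnion, Nat.card_zmultiples]
  let toFixed (B : {B : Finset (G ⧸ H) // addOrderOf t * #B = k}) :
      fixedBy (Set.powersetCard G k) t :=
    ⟨⟨cosetUnion B.1, (hcard B).trans B.2⟩,
      Subtype.ext (vadd_eq_self_iff_exists_cosetUnion.2 ⟨B, rfl⟩)⟩
  refine (Nat.card_congr (Equiv.ofBijective toFixed ⟨fun B B' h => ?_, ?_⟩)).symm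
  · exact Subtype.ext (cosetUnion_injective (congrArg (fun A => A.1.1) h))
  · rintro ⟨⟨A, hA⟩, hfix⟩
    obtain ⟨B, rfl⟩ := vadd_eq_self_iff_exists_cosetUnion.1 (congrArg Subtype.val hfix)
    exact ⟨⟨B, (hcard B).symm.trans hA⟩, rfl⟩

theorem card_fixedBy_powersetCard [Finite G] (t : G) (k : ℕ) :
    Nat.card (fixedBy (Set.powersetCard G k) t) =
      if addOrderOf t ∣ k then (Nat.card G / addOrderOf t).choose (k / addOrderOf t) else 0 := by
  have hpos : 0 < addOrderOf t := addOrderOf_pos t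
  have hquot : Nat.card (G ⧸ AddSubgroup.zmultiples t) = Nat.card G / addOrderOf t := by
    rw [(AddSubgroup.zmultiples t).card_eq_card_quotient_mul_card_addSubgroup, Nat.card_zmultiples,
      Nat.mul_div_cancel _ hpos]
  rw [card_fixedBy_powersetCard_eq_card_subtype]
  split_ifs with hdvd
  · obtain ⟨j, rfl⟩ := hdvd
    rw [Nat.mul_div_cancel_left _ hpos, ← hquot, ← Set.powersetCard.card]
    exact Nat.card_congr (Equiv.subtypeEquivRight fun _ => Nat.mul_right_inj hpos.ne')
  · have : IsEmpty {B : Finset (G ⧸ AddSubgroup.zmultiples t) // addOrderOf t * #B = k} :=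
      ⟨fun B => hdvd ⟨_, B.2.symm⟩⟩
    exact Nat.card_of_isEmpty

end FixedSubsets

section CharacterSums

theorem prod_range_mul_of_periodic {M : Type*} [CommMonoid M] {f : ℕ → M} {d : ℕ}
    (hf : Function.Periodic f d) (m : ℕ) :
    ∏ a ∈ range (d * m), f a = (∏ a ∈ range d, f a) ^ m := by
  induction m with
  | zero => simp
  | succ m ih =>
    rw [mul_add_one, prod_range_add, ih, pow_succ]
    congr 1
    refine prod_congr rfl fun a _ => ?_
    rw [add_comm, mul_comm, ← smul_eq_mul, hf.nsmul m a]

theorem prod_zmod_val {M : Type*} [CommMonoid M] {n : ℕ} [NeZero n] (f : ℕ → M) :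
    ∏ a : ZMod n, f a.val = ∏ a ∈ range n, f a := by
  obtain ⟨n, rfl⟩ := Nat.exists_eq_succ_of_ne_zero (NeZero.ne n)
  exact Fin.prod_univ_eq_prod_range f _

theorem addChar_sum {G M ι : Type*} [AddCommMonoid G] [CommMonoid M] (ψ : AddChar G M)
    (s : Finset ι) (f : ι → G) : ψ (∑ i ∈ s, f i) = ∏ i ∈ s, ψ (f i) :=
  map_prod ψ.toMonoidHom (fun i => Multiplicative.ofAdd (f i)) s

theorem orderOf_addChar_one_dvd {M : Type*} [CommMonoid M] {n : ℕ} (ψ : AddChar (ZMod n) M) :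
    orderOf (ψ 1) ∣ n := by
  rw [orderOf_dvd_iff_pow_eq_one, ← AddChar.map_nsmul_eq_pow, nsmul_one, ZMod.natCast_self,
    AddChar.map_zero_eq_one]

theorem orderOf_stdAddChar {n : ℕ} [NeZero n] (t : ZMod n) :
    orderOf (ZMod.stdAddChar t) = addOrderOf t :=
  (orderOf_injective ZMod.stdAddChar.toMonoidHom ZMod.injective_stdAddChar
    (Multiplicative.ofAdd t)).trans (orderOf_ofAdd_eq_addOrderOf t)

theorem coeff_prod_one_add_C_mul_X {R ι : Type*} [CommSemiring R] (s : Finset ι) (f : ι → R)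
    (k : ℕ) :
    (∏ i ∈ s, (1 + C (f i) * X)).coeff k = ∑ A ∈ powersetCard k s, ∏ i ∈ A, f i := by
  classical
  simp only [prod_one_add, prod_mul_distrib, prod_const, ← map_prod, finsetSum_coeff,
    coeff_C_mul_X_pow]
  rw [← sum_filter, powersetCard_eq_filter]
  simp only [eq_comm]

variable {R : Type*} [CommRing R]

theorem prod_range_sub_pow_mul [IsDomain R] {ζ : R} {d : ℕ}
    (hζ : IsPrimitiveRoot ζ d) (hd : 0 < d) (x y : R) :
    ∏ a ∈ range d, (x - ζ ^ a * y) = x ^ d - y ^ d := by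
  classical
  have : NeZero d := ⟨hd.ne'⟩
  have himage : nthRootsFinset d (1 : R) = (range d).image (ζ ^ ·) := by
    ext ξ
    simp only [mem_nthRootsFinset hd, mem_image, mem_range]
    refine ⟨hζ.eq_pow_of_pow_eq_one, ?_⟩
    rintro ⟨a, -, rfl⟩
    rw [pow_right_comm, hζ.pow_eq_one, one_pow]
  have hinj : Set.InjOn (ζ ^ ·) (range d : Set ℕ) := fun a ha b hb =>
    hζ.pow_inj (mem_range.1 ha) (mem_range.1 hb)
  rw [hζ.pow_sub_pow_eq_prod_sub_mul x y hd, himage, prod_image hinj]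

theorem prod_one_add_addChar [IsDomain R] {n : ℕ} [NeZero n] (ψ : AddChar (ZMod n) R) :
    ∏ a, (1 + C (ψ a) * X) = (1 - (-X) ^ orderOf (ψ 1)) ^ (n / orderOf (ψ 1)) := by
  set d := orderOf (ψ 1)
  have hdvd : d ∣ n := orderOf_addChar_one_dvd ψ
  have hpos : 0 < d := Nat.pos_of_dvd_of_pos hdvd (NeZero.pos n)
  have hζ : IsPrimitiveRoot (C (ψ 1)) d :=
    (IsPrimitiveRoot.orderOf (ψ 1)).map_of_injective C_injective
  have hperiodic : Function.Periodic (fun a => 1 - C (ψ 1) ^ a * -X) d := fun a => by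
    simp only [pow_add, hζ.pow_eq_one, mul_one]
  calc ∏ a, (1 + C (ψ a) * X) = ∏ a : ZMod n, (1 - C (ψ 1) ^ a.val * -X) := by
        refine prod_congr rfl fun a _ => ?_
        rw [← C_pow, ← AddChar.map_nsmul_eq_pow, nsmul_one, ZMod.natCast_zmod_val, mul_neg,
          sub_neg_eq_add]
    _ = ∏ a ∈ range (d * (n / d)), (1 - C (ψ 1) ^ a * -X) := by
        rw [prod_zmod_val fun a => 1 - C (ψ 1) ^ a * -X, Nat.mul_div_cancel' hdvd]
    _ = (1 - (-X) ^ d) ^ (n / d) := by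
        rw [prod_range_mul_of_periodic hperiodic, prod_range_sub_pow_mul hζ hpos, one_pow]

/-- Oddness of `d` or `k` makes the sign of `(-X) ^ d` harmless: for odd `d` it turns the minus into
a plus, and for even `d` an odd `k` is not a multiple of `d`. -/
theorem coeff_one_sub_neg_X_pow_pow {d k : ℕ} (hd : 0 < d) (h : Odd d ∨ Odd k) (m : ℕ) :
    ((1 - (-X) ^ d : R[X]) ^ m).coeff k = if d ∣ k then (m.choose (k / d) : R) else 0 := by
  rcases Nat.even_or_odd d with hd_even | hd_odd
  · have hk : Odd k := h.resolve_left (Nat.not_odd_iff_even.2 hd_even)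
    have hndvd : ¬d ∣ k := fun hdvd => Nat.not_odd_iff_even.2 (hd_even.trans_dvd hdvd) hk
    have hexpand : (1 - (-X) ^ d : R[X]) ^ m = expand R d ((1 - X) ^ m) := by
      simp [hd_even.neg_pow]
    rw [hexpand, coeff_expand hd, if_neg hndvd, if_neg hndvd]
  · have hexpand : (1 - (-X) ^ d : R[X]) ^ m = expand R d ((1 + X) ^ m) := by
      simp [hd_odd.neg_pow]
    rw [hexpand, coeff_expand hd, coeff_one_add_X_pow]

theorem sum_powersetCard_addChar_sum [IsDomain R] {n k : ℕ} [NeZero n] (h : Odd n ∨ Odd k)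
    (ψ : AddChar (ZMod n) R) :
    ∑ A ∈ powersetCard k univ, ψ (∑ a ∈ A, a) =
      if orderOf (ψ 1) ∣ k then ((n / orderOf (ψ 1)).choose (k / orderOf (ψ 1)) : R) else 0 := by
  have hdvd := orderOf_addChar_one_dvd ψ
  rw [← coeff_one_sub_neg_X_pow_pow (Nat.pos_of_dvd_of_pos hdvd (NeZero.pos n))
    (h.imp_left fun hn => hn.of_dvd_nat hdvd), ← prod_one_add_addChar, coeff_prod_one_add_C_mul_X]
  simp only [addChar_sum]

theorem card_mul_card_filter_eq_sum_addChar {S ι : Type*} [CommRing S] [Fintype S]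
    [DecidableEq S] [IsDomain R] {ψ : AddChar S R} (hψ : ψ.IsPrimitive) (s : Finset ι)
    (f : ι → S) (r : S) :
    (Fintype.card S * #{i ∈ s | f i = r} : R) =
      ∑ t, ψ (-r * t) * ∑ i ∈ s, ψ.mulShift t (f i) := by
  calc (Fintype.card S * #{i ∈ s | f i = r} : R)
      = ∑ i ∈ s, ∑ t, ψ (t * (f i - r)) := by
        simp only [AddChar.sum_mulShift _ hψ, sub_eq_zero]
        rw [card_filter]
        push_cast
        rw [mul_sum]
        simp
    _ = ∑ t, ψ (-r * t) * ∑ i ∈ s, ψ.mulShift t (f i) := by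
        rw [sum_comm]
        simp only [mul_sum, AddChar.mulShift_apply, ← AddChar.map_add_eq_mul]
        refine sum_congr rfl fun t _ => sum_congr rfl fun i _ => congrArg ψ ?_
        ring

end CharacterSums

section Words

/-- The set of positions of the ones of a binary word, as an equivalence between words and sets of
positions. -/
def wordSupport {α : Type*} [Fintype α] [DecidableEq α] : (α → Bool) ≃ Finset α where
  toFun w := {i | w i = true}
  invFun A i := decide (i ∈ A)
  left_inv w := by simp
  right_inv A := by simp

theorem mem_wordSupport {α : Type*} [Fintype α] [DecidableEq α] {w : α → Bool} {i : α} :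
    i ∈ wordSupport w ↔ w i = true := by
  simp [wordSupport]

variable {n : ℕ} [NeZero n]

theorem vadd_wordSupport_eq_iff {u v : ZMod n → Bool} {t : ZMod n} :
    t +ᵥ wordSupport u = wordSupport v ↔ ∀ i, v (i + t) = u i := by
  rw [Finset.ext_iff, ← (Equiv.addRight t).forall_congr_right]
  refine forall_congr' fun i => ?_
  rw [← neg_vadd_mem_iff, mem_wordSupport, mem_wordSupport, Bool.coe_iff_coe, eq_comm]
  simp only [Equiv.coe_addRight, vadd_eq_add, add_comm i t, neg_add_cancel_left]

theorem onesCount_eq_card_wordSupport (w : ZMod n → Bool) : onesCount n w = #(wordSupport w) := by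
  rw [onesCount, Nat.card_eq_fintype_card, Fintype.card_subtype]
  rfl

theorem rotRel_iff_orbitRel_wordSupport {u v : ZMod n → Bool} :
    rotRel n u v ↔ orbitRel (ZMod n) (Finset (ZMod n)) (wordSupport u) (wordSupport v) := by
  rw [Setoid.comm', orbitRel_apply, mem_orbit_iff]
  simp only [vadd_wordSupport_eq_iff]
  exact exists_congr fun t => forall_congr' fun i => eq_comm

theorem coPeriod_eq_card_stabilizer (w : ZMod n → Bool) :
    coPeriod n w = Nat.card (stabilizer (ZMod n) (wordSupport w)) :=
  Nat.card_congr (Equiv.subtypeEquivRight fun _ => vadd_wordSupport_eq_iff.symm)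

theorem card_dvd_iff_stdAddChar_neg_mul_eq_one (H : AddSubgroup (ZMod n)) (r : ℕ) :
    Nat.card H ∣ r ↔ ∀ t ∈ H, (ZMod.stdAddChar (-(r : ZMod n) * t) : ℂ) = 1 := by
  rw [← IsAddCyclic.exponent_eq_card, AddMonoid.exponent_dvd_iff_forall_nsmul_eq_zero,
    Subtype.forall]
  refine forall₂_congr fun t ht => ?_
  rw [← AddChar.map_zero_eq_one (ZMod.stdAddChar (N := n)), ZMod.injective_stdAddChar.eq_iff,
    neg_mul, neg_eq_zero, ← nsmul_eq_mul, Subtype.ext_iff]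
  rfl

variable (n) in
/-- The `wordSupport` equivalence restricted to words with `k` ones. -/
def wordSupportOfOnesCount (k : ℕ) :
    {w : ZMod n → Bool // onesCount n w = k} ≃ Set.powersetCard (ZMod n) k :=
  wordSupport.subtypeEquiv fun w => by rw [onesCount_eq_card_wordSupport, Set.powersetCard.mem_iff]

theorem coPeriod_dvd_iff_mem_trivialOnStabilizer {k : ℕ}
    (w : {w : ZMod n → Bool // onesCount n w = k}) (r : ℕ) :
    coPeriod n w ∣ r ↔ wordSupportOfOnesCount n k w ∈
      trivialOnStabilizer _ ((ZMod.stdAddChar (N := n)).mulShift (-r)) := by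
  rw [coPeriod_eq_card_stabilizer, card_dvd_iff_stdAddChar_neg_mul_eq_one,
    mem_trivialOnStabilizer]
  simp only [mem_stabilizer_iff, AddChar.mulShift_apply, Subtype.ext_iff,
    Set.powersetCard.coe_vadd]
  rfl

theorem NrCard_eq_card_orbits (k r : ℕ) :
    NrCard n k r = Nat.card (orbitRel.Quotient (ZMod n) (trivialOnStabilizer
      (Set.powersetCard (ZMod n) k) ((ZMod.stdAddChar (N := n)).mulShift (-r)))) := by
  refine Nat.card_congr (Quotient.congr ((Equiv.subtypeSubtypeEquivSubtypeInter _ _).symm.trans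
    ((wordSupportOfOnesCount n k).subtypeEquiv fun w =>
      coPeriod_dvd_iff_mem_trivialOnStabilizer w r)) fun u v => ?_)
  have hpowersetCard : orbitRel (ZMod n) (Set.powersetCard (ZMod n) k) =
      (orbitRel (ZMod n) (Finset (ZMod n))).comap Subtype.val :=
    SubAddAction.orbitRel_of_subAdd (Set.powersetCard.subAddAction (ZMod n) (ZMod n) k)
  rw [SubAddAction.orbitRel_of_subAdd, hpowersetCard]
  exact rotRel_iff_orbitRel_wordSupport (u := u.1) (v := v.1)

end Words

theorem injOn_natCast_Icc (n : ℕ) : Set.InjOn (Nat.cast : ℕ → ZMod n) (Icc 1 n : Finset ℕ) := by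
  intro a ha b hb hab
  rw [coe_Icc, Set.mem_Icc] at ha hb
  refine ((ZMod.natCast_eq_natCast_iff _ _ _).1 hab).eq_of_abs_lt ?_
  rw [abs_lt]
  omega

theorem image_natCast_Icc (n : ℕ) [NeZero n] : (Icc 1 n).image (Nat.cast : ℕ → ZMod n) = univ :=
  eq_univ_of_card _ (by
    rw [card_image_of_injOn (injOn_natCast_Icc n), Nat.card_Icc, ZMod.card, Nat.add_sub_cancel])

theorem SbarCard_eq_card_filter_powersetCard {n : ℕ} [NeZero n] (k : ℕ) {r : ℕ} (hr : r < n) :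
    SbarCard n k r =
      #{A ∈ powersetCard k (univ : Finset (ZMod n)) | ∑ a ∈ A, a = (r : ZMod n)} := by
  have hmod (A : Finset ℕ) (hA : A ∈ (Icc 1 n).powerset) :
      #A = k ∧ (∑ a ∈ A, a) % n = r ↔
        #(A.image (Nat.cast : ℕ → ZMod n)) = k ∧
          ∑ a ∈ A.image (Nat.cast : ℕ → ZMod n), a = (r : ZMod n) := by
    have hinj := (injOn_natCast_Icc n).mono (coe_subset.2 (mem_powerset.1 hA))
    rw [card_image_of_injOn hinj, sum_image hinj, ← Nat.cast_sum,
      ZMod.natCast_eq_natCast_iff', Nat.mod_eq_of_lt hr]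
  rw [powersetCard_eq_filter, filter_filter, ← image_natCast_Icc, powerset_image, filter_image,
    card_image_of_injOn ((image_injOn_powerset_of_injOn (injOn_natCast_Icc n)).mono
      (coe_subset.2 (filter_subset _ _))), SbarCard, filter_congr hmod]

/-- If `n` or `k` is odd, then `|S̄ᵣ(n,k)| = |Nᵣ(n,k)|`. -/
theorem Sbar_eq_Nr_of_odd (n k r : ℕ) (h : Odd n ∨ Odd k) (hk : k ≤ n) (hr : r < n) :
    SbarCard n k r = NrCard n k r := by
  have : NeZero n := ⟨by omega⟩
  have hchar (t : ZMod n) : ∑ A ∈ powersetCard k (univ : Finset (ZMod n)),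
      ZMod.stdAddChar.mulShift t (∑ a ∈ A, a) =
        (Nat.card (fixedBy (Set.powersetCard (ZMod n) k) t) : ℂ) := by
    rw [sum_powersetCard_addChar_sum h, AddChar.mulShift_apply, mul_one, orderOf_stdAddChar,
      card_fixedBy_powersetCard, Nat.card_zmod]
    push_cast
    rfl
  have hcount : (n * SbarCard n k r : ℂ) = n * NrCard n k r := by
    have hFourier := card_mul_card_filter_eq_sum_addChar (ZMod.isPrimitive_stdAddChar n)
      (powersetCard k univ) (fun A => ∑ a ∈ A, a) r
    have hBurnside := sum_addChar_mul_card_fixedBy (X := Set.powersetCard (ZMod n) k)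
      ((ZMod.stdAddChar (N := n)).mulShift (-r))
    simp only [hchar, ZMod.card, ← AddChar.mulShift_apply] at hFourier
    rw [SbarCard_eq_card_filter_powersetCard k hr, NrCard_eq_card_orbits, hFourier, hBurnside,
      Nat.card_zmod]
  exact_mod_cast mul_left_cancel₀ (NeZero.ne (n : ℂ)) hcount
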